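/- Let M be an admissible weight sequence, Ω ⊆ ℝ^n a bounded open set, and E a Banach space together with an injective continuous linear map ι : E → L²(Ω). Suppose there is an open set U₀ ⊆ Ω such that for every u ∈ E the function ι(u) agrees almost everywhere on U₀ with a function ũ belonging to the Denjoy–Carleman class E^{M}(U₀). Then for all open sets V ⋐ U ⋐ U₀ and every Ehrenpreis–Hörmander cut-off sequence (χ_k)_{k≥1} supported in U and centered in V, there exist constants C, γ > 0 such that for all k ≥ 1 and all u ∈ E: the function ξ ↦ |ξ|^k F(χ_k ũ)(ξ) lies in L²(ℝ^n), where χ_k ũ is extended by 0 outside U, and ‖ |ξ|^k F(χ_k ũ) ‖_{L²(ℝ^n)} ≤ C γ^k M_k ‖u‖_E. -/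

import Mathlib

open MeasureTheory Filter Finset

noncomputable section

/-- `M` is a weight sequence: positivity, `M₀ = 1`, `M₁ ≥ 1`, log-convexity, and
`M_k^{1/k} → ∞`. -/
def IsWeightSeq (M : ℕ → ℝ) : Prop :=
  (∀ k, 0 < M k) ∧ M 0 = 1 ∧ 1 ≤ M 1 ∧
    (∀ k : ℕ, (M (k + 1)) ^ 2 ≤ M k * M (k + 2)) ∧
    Tendsto (fun k : ℕ => (M k) ^ ((k : ℝ)⁻¹)) atTop atTop

/-- `Λ_k = M_k^{1/k}`. -/
def Lam (M : ℕ → ℝ) (k : ℕ) : ℝ := (M k) ^ ((k : ℝ)⁻¹)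

/-- Condition (i): there are `C, h > 0` with `k! ≤ C h^k M_k` for all `k`. -/
def FactBound (M : ℕ → ℝ) : Prop :=
  ∃ C > 0, ∃ h > 0, ∀ k : ℕ, (k.factorial : ℝ) ≤ C * h ^ k * M k

/-- Condition (mg): there is `A > 0` with `M_{j+k} ≤ A^{j+k} M_j M_k` for all `j, k`. -/
def MG (M : ℕ → ℝ) : Prop := ∃ A > 0, ∀ j k : ℕ, M (j + k) ≤ A ^ (j + k) * M j * M k

/-- Admissible weight sequence. -/
def IsAdmissible (M : ℕ → ℝ) : Prop := IsWeightSeq M ∧ FactBound M ∧ MG M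

/-- Euclidean `n`-space. -/
abbrev Esp (n : ℕ) := EuclideanSpace ℝ (Fin n)

/-- The length `|α|` of a multi-index. -/
def degree {n : ℕ} (α : Fin n → ℕ) : ℕ := ∑ i, α i

/-- The finite set of all multi-indices `α` with `|α| ≤ k`. -/
def midx (n k : ℕ) : Finset (Fin n → ℕ) :=
  (Fintype.piFinset fun _ : Fin n => Finset.range (k + 1)).filter fun α => degree α ≤ k

/-- The monomial `ξ^α`. -/
def mon {n : ℕ} (α : Fin n → ℕ) (ξ : Esp n) : ℝ := ∏ i, ξ i ^ α i

/-- The `L²(ℝ^n)` norm of a complex-valued function. -/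
def L2C {n : ℕ} (g : Esp n → ℂ) : ℝ := (∫ ξ : Esp n, ‖g ξ‖ ^ 2) ^ ((1 : ℝ) / 2)

/-- Partial derivative in the `i`-th coordinate direction. -/
def pd {n : ℕ} (i : Fin n) (f : Esp n → ℝ) : Esp n → ℝ :=
  fun x => fderiv ℝ f x (EuclideanSpace.single i 1)

/-- The multi-index derivative `∂^α f`. -/
def mderiv {n : ℕ} (α : Fin n → ℕ) (f : Esp n → ℝ) : Esp n → ℝ :=
  ((List.finRange n).flatMap fun i => List.replicate (α i) i).foldr pd f

/-- The Denjoy–Carleman class `E^{M}(Ω)`: smooth functions on `Ω` such that on every compact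
`K ⊆ Ω` the derivatives satisfy `|∂^α f| ≤ C h^{|α|} M_{|α|}`. -/
def DCclass {n : ℕ} (M : ℕ → ℝ) (Ω : Set (Esp n)) : Set (Esp n → ℝ) :=
  {f | ContDiffOn ℝ (⊤ : ℕ∞) f Ω ∧ ∀ K : Set (Esp n), K ⊆ Ω → IsCompact K →
    ∃ C > 0, ∃ h > 0, ∀ (α : Fin n → ℕ), ∀ x ∈ K,
      |mderiv α f x| ≤ C * h ^ degree α * M (degree α)}

/-- Ehrenpreis–Hörmander cut-off sequence supported in `U`, centered in `V`,
with constant `Q`. -/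
def EHCutoff {n : ℕ} (χ : ℕ → Esp n → ℝ) (U V : Set (Esp n)) (Q : ℝ) : Prop :=
  ∀ k : ℕ, 1 ≤ k → ContDiff ℝ (⊤ : ℕ∞) (χ k) ∧ HasCompactSupport (χ k) ∧
    tsupport (χ k) ⊆ U ∧ (∀ x ∈ V, χ k x = 1) ∧
    ∀ α : Fin n → ℕ, degree α ≤ k → ∀ x,
      |mderiv α (χ k) x| ≤ Q ^ degree α * (k : ℝ) ^ degree α


lemma mderiv_single' {n : ℕ} (i : Fin n) (k : ℕ) (f : Esp n → ℝ) :
    mderiv (Pi.single i k) f = (pd i)^[k] f := by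
  have h : ((List.finRange n).flatMap fun j => List.replicate ((Pi.single i k : Fin n → ℕ) j) j)
      = List.replicate k i := by
    rw [List.eq_replicate_iff]
    constructor
    · rw [List.length_flatMap]
      simp only [List.length_replicate]
      rw [← List.ofFn_eq_map, List.sum_ofFn]
      simp
    · intro b hb
      rw [List.mem_flatMap] at hb
      obtain ⟨a, _, ha⟩ := hb
      rw [List.mem_replicate] at ha
      obtain ⟨h1, rfl⟩ := ha
      by_contra hne
      exact h1 (by simp [hne])
  unfold mderiv
  rw [h]
  clear h
  induction k with
  | zero => simp
  | succ k ih => rw [List.replicate_succ, List.foldr_cons, ih, Function.iterate_succ_apply']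

lemma degree_single' {n : ℕ} (i : Fin n) (k : ℕ) : degree (Pi.single i k : Fin n → ℕ) = k := by
  simp [degree]

lemma pd_smooth {n : ℕ} (i : Fin n) {S : Set (Esp n)} (hS : IsOpen S) {f : Esp n → ℝ}
    (hf : ContDiffOn ℝ (⊤ : ℕ∞) f S) : ContDiffOn ℝ (⊤ : ℕ∞) (pd i f) S := by
  have h1 : ContDiffOn ℝ (⊤ : ℕ∞) (fderiv ℝ f) S := hf.fderiv_of_isOpen hS (by simp)
  exact h1.clm_apply contDiffOn_const

lemma pd_iter_smooth {n : ℕ} (i : Fin n) {S : Set (Esp n)} (hS : IsOpen S) {f : Esp n → ℝ}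
    (hf : ContDiffOn ℝ (⊤ : ℕ∞) f S) (k : ℕ) : ContDiffOn ℝ (⊤ : ℕ∞) ((pd i)^[k] f) S := by
  induction k with
  | zero => simpa using hf
  | succ k ih => rw [Function.iterate_succ_apply']; exact pd_smooth i hS ih

lemma pd_iter_line {n : ℕ} (i : Fin n) {S : Set (Esp n)} (hS : IsOpen S) {f : Esp n → ℝ}
    (hf : ContDiffOn ℝ (⊤ : ℕ∞) f S) (x : Esp n) (k : ℕ) :
    ∀ t : ℝ, x + t • EuclideanSpace.single i (1:ℝ) ∈ S →
      iteratedDeriv k (fun s : ℝ => f (x + s • EuclideanSpace.single i (1:ℝ))) t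
        = (pd i)^[k] f (x + t • EuclideanSpace.single i (1:ℝ)) := by
  induction k with
  | zero => intro t _; simp
  | succ k ih =>
    intro t ht
    rw [iteratedDeriv_succ, Function.iterate_succ_apply']
    have hcont : Continuous fun s : ℝ => x + s • EuclideanSpace.single i (1:ℝ) := by fun_prop
    have hev : (iteratedDeriv k fun s : ℝ => f (x + s • EuclideanSpace.single i (1:ℝ)))
        =ᶠ[nhds t] fun s => (pd i)^[k] f (x + s • EuclideanSpace.single i (1:ℝ)) := by
      filter_upwards [hcont.continuousAt.preimage_mem_nhds (hS.mem_nhds ht)] with s hs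
      exact ih s hs
    rw [hev.deriv_eq]
    have hd : DifferentiableAt ℝ ((pd i)^[k] f) (x + t • EuclideanSpace.single i (1:ℝ)) :=
      ((pd_iter_smooth i hS hf k).contDiffAt (hS.mem_nhds ht)).differentiableAt (by simp)
    have hl : HasDerivAt (fun s : ℝ => x + s • EuclideanSpace.single i (1:ℝ))
        (EuclideanSpace.single i (1:ℝ)) t := by
      simpa using ((hasDerivAt_id t).smul_const (EuclideanSpace.single i (1:ℝ))).const_add x
    exact (hd.hasFDerivAt.comp_hasDerivAt t hl).deriv

lemma pd_leibniz {n : ℕ} (i : Fin n) {S : Set (Esp n)} (hS : IsOpen S) {f g : Esp n → ℝ}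
    (hf : ContDiffOn ℝ (⊤ : ℕ∞) f S) (hg : ContDiffOn ℝ (⊤ : ℕ∞) g S) (x : Esp n) (hx : x ∈ S)
    (k : ℕ) :
    (pd i)^[k] (fun y => f y * g y) x = ∑ j ∈ Finset.range (k + 1),
      (k.choose j : ℝ) * (pd i)^[j] f x * (pd i)^[k - j] g x := by
  have hx0 : x + (0:ℝ) • EuclideanSpace.single i (1:ℝ) ∈ S := by simpa using hx
  have hline : ContDiff ℝ (⊤ : ℕ∞) fun s : ℝ => x + s • EuclideanSpace.single i (1:ℝ) := by
    fun_prop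
  have key : ∀ (φ : Esp n → ℝ), ContDiffOn ℝ (⊤ : ℕ∞) φ S →
      ContDiffAt ℝ (⊤ : ℕ∞) (fun s : ℝ => φ (x + s • EuclideanSpace.single i (1:ℝ))) 0 := by
    intro φ hφ
    exact (hφ.contDiffAt (hS.mem_nhds hx0)).comp (0:ℝ) hline.contDiffAt
  have e1 := pd_iter_line i hS (hf.mul hg) x k 0 hx0
  have e2 := iteratedDeriv_fun_mul (n := k) ((key f hf).of_le (by exact_mod_cast le_top))
    ((key g hg).of_le (by exact_mod_cast le_top))
  rw [e1] at e2
  simp only [zero_smul, add_zero] at e2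
  rw [e2]
  refine Finset.sum_congr rfl fun j _ => ?_
  rw [pd_iter_line i hS hf x j 0 hx0, pd_iter_line i hS hg x (k - j) 0 hx0]
  simp

lemma weight_mul {M : ℕ → ℝ} (hM : IsWeightSeq M) (j l : ℕ) : M j * M l ≤ M (j + l) := by
  obtain ⟨hpos, h0, h1, hlc, -⟩ := hM
  -- ratio monotonicity: M (a+1) * M b ≤ M a * M (b+1) for a ≤ b
  have hr : ∀ a d, M (a + 1) * M (a + d) ≤ M a * M (a + d + 1) := by
    intro a d
    induction d with
    | zero => simp [mul_comm]
    | succ d ih =>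
      have h2 := hlc (a + d)
      have hp := hpos (a + d)
      have hq := hpos (a + d + 1)
      have hA := hpos a
      have hB := hpos (a+1)
      rw [show a + (d+1) = a + d + 1 by ring]
      have : (M (a + 1) * M (a + d + 1)) * M (a+d) ≤ (M a * M (a + d + 1 + 1)) * M (a+d) := by
        calc (M (a + 1) * M (a + d + 1)) * M (a+d) = (M (a+1) * M (a+d)) * M (a+d+1) := by ring
          _ ≤ (M a * M (a+d+1)) * M (a+d+1) := by gcongr
          _ = M a * M (a+d+1)^2 := by ring
          _ ≤ M a * (M (a+d) * M (a+d+2)) := by gcongr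
          _ = _ := by ring_nf
      exact le_of_mul_le_mul_right this hp
  induction j with
  | zero => simp [h0]
  | succ j ih =>
    have h := hr j l
    have : (M (j+1) * M l) * M j ≤ M (j + 1 + l) * M j := by
      calc (M (j+1) * M l) * M j = M (j+1) * (M j * M l) := by ring
        _ ≤ M (j+1) * M (j+l) := by have := hpos (j+1); gcongr
        _ ≤ M j * M (j+l+1) := h
        _ = _ := by rw [show j + 1 + l = j + l + 1 by ring]; ring
    exact le_of_mul_le_mul_right this (hpos j)

/-- pointwise bound for pure derivatives of the cut-off product -/
lemma prod_bound {n : ℕ} {M : ℕ → ℝ} (hM : IsAdmissible M) {U₀ U V : Set (Esp n)}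
    (hU₀ : IsOpen U₀) (hUU₀ : closure U ⊆ U₀) (hUc : IsCompact (closure U))
    {Q : ℝ} (hQ : 0 < Q) {χ : ℕ → Esp n → ℝ} (hχ : EHCutoff χ U V Q)
    {v : Esp n → ℝ} (hv : v ∈ DCclass M U₀) :
    ∃ C > 0, ∃ γ > 0, ∀ k : ℕ, 1 ≤ k → ∀ i : Fin n, ∀ x ∈ closure U,
      |(pd i)^[k] (fun y => χ k y * v y) x| ≤ C * γ ^ k * M k := by
  obtain ⟨hW, ⟨C₁, hC₁, h₁, hh₁, hfac⟩, -⟩ := hM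
  obtain ⟨hvs, hvb⟩ := hv
  obtain ⟨C₂, hC₂, h₂, hh₂, hb⟩ := hvb (closure U) hUU₀ hUc
  refine ⟨C₁ * C₂, by positivity, Real.exp 1 * (Q * h₁ + h₂), by positivity, ?_⟩
  intro k hk i x hx
  obtain ⟨hs, -, -, -, hχb⟩ := hχ k hk
  rw [pd_leibniz i hU₀ hs.contDiffOn hvs x (hUU₀ hx) k]
  calc _ ≤ ∑ j ∈ Finset.range (k + 1),
      |(k.choose j : ℝ) * (pd i)^[j] (χ k) x * (pd i)^[k - j] v x| := Finset.abs_sum_le_sum_abs _ _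
    _ ≤ ∑ j ∈ Finset.range (k + 1),
      (C₁ * C₂ * Real.exp 1 ^ k * M k) * ((Q * h₁) ^ j * h₂ ^ (k - j) * (k.choose j : ℝ)) := by
        refine Finset.sum_le_sum fun j hj => ?_
        have hjk : j ≤ k := by simpa [Nat.lt_succ_iff] using hj
        have b1 := hχb (Pi.single i j) (by rwa [degree_single']) x
        have b2 := hb (Pi.single i (k - j)) x hx
        rw [mderiv_single', degree_single'] at b1 b2
        have b3 : (k:ℝ) ^ j ≤ Real.exp 1 ^ k * (j.factorial : ℝ) := by
          have := Real.pow_div_factorial_le_exp (k:ℝ) (Nat.cast_nonneg k) j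
          rw [div_le_iff₀ (by positivity)] at this
          rwa [← Real.exp_nat_mul, mul_one]
        have b4 := hfac j
        have b5 := weight_mul hW j (k - j)
        rw [Nat.add_sub_cancel' hjk] at b5
        have p1 := hW.1 j
        have p2 := hW.1 (k - j)
        rw [abs_mul, abs_mul, Nat.abs_cast]
        calc _ ≤ (k.choose j : ℝ) * (Q ^ j * (k:ℝ) ^ j) * (C₂ * h₂ ^ (k - j) * M (k - j)) := by
              gcongr
          _ ≤ (k.choose j : ℝ) * (Q ^ j * (Real.exp 1 ^ k * (C₁ * h₁ ^ j * M j)))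
              * (C₂ * h₂ ^ (k - j) * M (k - j)) := by
              have : (k:ℝ) ^ j ≤ Real.exp 1 ^ k * (C₁ * h₁ ^ j * M j) :=
                b3.trans (by gcongr)
              gcongr
          _ = (C₁ * C₂ * Real.exp 1 ^ k * (M j * M (k - j))) *
              ((Q * h₁) ^ j * h₂ ^ (k - j) * (k.choose j : ℝ)) := by rw [mul_pow]; ring
          _ ≤ _ := by gcongr
    _ = _ := by
        rw [← Finset.mul_sum, ← add_pow, mul_pow]; ring

lemma norm_pow_le_sum {n : ℕ} (ξ : Esp n) {k : ℕ} (hk : 1 ≤ k) :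
    ‖ξ‖ ^ (2 * k) ≤ ((n:ℝ) + 1) ^ (2 * k) * ∑ i, (ξ i) ^ (2 * k) := by
  obtain ⟨m, rfl⟩ : ∃ m, k = m + 1 := ⟨k - 1, by omega⟩
  have h := pow_sum_le_card_mul_sum_pow (s := (Finset.univ : Finset (Fin n)))
    (f := fun i => (ξ i) ^ 2) (fun i _ => sq_nonneg _) m
  rw [pow_mul, EuclideanSpace.norm_sq_eq]
  simp only [Real.norm_eq_abs, sq_abs]
  refine h.trans ?_
  simp only [pow_mul]
  have h0 : 0 ≤ ∑ i, ((ξ i) ^ 2) ^ (m + 1) := Finset.sum_nonneg fun i _ => by positivity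
  refine mul_le_mul_of_nonneg_right ?_ h0
  simp only [Finset.card_univ, Fintype.card_fin]
  have hn : (0:ℝ) ≤ n := Nat.cast_nonneg n
  calc (n:ℝ) ^ m ≤ ((n:ℝ) + 1) ^ m := by gcongr; linarith
    _ ≤ ((n:ℝ) + 1) ^ (2 * (m + 1)) := pow_le_pow_right₀ (by linarith) (by omega)
    _ = _ := by rw [pow_mul]

open scoped SchwartzMap LineDeriv FourierTransform in
lemma schwartz_iter {n : ℕ} (i : Fin n) {g : Esp n → ℝ} (hg : ContDiff ℝ (⊤ : ℕ∞) g)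
    (f : 𝓢(Esp n, ℂ)) (hf : ∀ x, f x = ((g x : ℝ) : ℂ)) (k : ℕ) :
    ∃ F : 𝓢(Esp n, ℂ), (∀ x, F x = (((pd i)^[k] g x : ℝ) : ℂ)) ∧
      ∀ ξ, 𝓕 F ξ = (2 * Real.pi * Complex.I * (ξ i : ℝ)) ^ k * 𝓕 f ξ := by
  induction k with
  | zero => exact ⟨f, by simpa using hf, by simp⟩
  | succ k ih =>
    obtain ⟨F, h1, h2⟩ := ih
    refine ⟨∂_{EuclideanSpace.single i (1:ℝ)} F, ?_, ?_⟩
    · intro x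
      rw [SchwartzMap.lineDerivOp_apply_eq_fderiv, Function.iterate_succ_apply']
      have hFe : (F : Esp n → ℂ) = fun x => Complex.ofRealCLM ((pd i)^[k] g x) := by
        ext x; simpa using h1 x
      have hd : DifferentiableAt ℝ ((pd i)^[k] g) x :=
        ((pd_iter_smooth i isOpen_univ hg.contDiffOn k).contDiffAt
          Filter.univ_mem).differentiableAt (by simp)
      have := (Complex.ofRealCLM.hasFDerivAt.comp x hd.hasFDerivAt).fderiv
      rw [hFe]
      change fderiv ℝ (⇑Complex.ofRealCLM ∘ (pd i)^[k] g) x _ = _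
      rw [this]
      rfl
    · intro ξ
      have : (fun x : Esp n => inner ℝ x (EuclideanSpace.single i (1:ℝ))).HasTemperateGrowth :=
        ((innerSL ℝ).flip (EuclideanSpace.single i (1:ℝ))).hasTemperateGrowth
      rw [SchwartzMap.fourier_lineDerivOp_eq, smul_apply,
        SchwartzMap.smulLeftCLM_apply_apply this, h2 ξ]
      simp [EuclideanSpace.inner_single_right]
      ring

open scoped SchwartzMap FourierTransform in
lemma fourier_weighted {n : ℕ} {g : Esp n → ℝ} (hg : ContDiff ℝ (⊤ : ℕ∞) g)
    (hc : HasCompactSupport g) {K : Set (Esp n)} (hK : IsCompact K) (hgK : tsupport g ⊆ K)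
    {k : ℕ} (hk : 1 ≤ k) {B : ℝ} (hB : 0 ≤ B)
    (hb : ∀ i : Fin n, ∀ x ∈ K, |(pd i)^[k] g x| ≤ B) :
    Integrable (fun ξ : Esp n => ‖ξ‖ ^ (2 * k) * ‖𝓕 (fun x : Esp n => ((g x : ℝ) : ℂ)) ξ‖ ^ 2) ∧
    ∫ ξ : Esp n, ‖ξ‖ ^ (2 * k) * ‖𝓕 (fun x : Esp n => ((g x : ℝ) : ℂ)) ξ‖ ^ 2 ≤
      (((n:ℝ) * volume.real K + 1) * ((n:ℝ) + 1) ^ k * B) ^ 2 := by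
  have hgc : ContDiff ℝ (⊤ : ℕ∞) (fun x : Esp n => ((g x : ℝ) : ℂ)) :=
    Complex.ofRealCLM.contDiff.comp hg
  have hcc : HasCompactSupport (fun x : Esp n => ((g x : ℝ) : ℂ)) :=
    hc.comp_left (g := fun r : ℝ => (r : ℂ)) (by simp)
  set f : 𝓢(Esp n, ℂ) := hcc.toSchwartzMap hgc with hfdef
  have hf : ∀ x, f x = ((g x : ℝ) : ℂ) := fun x => rfl
  have hfe : (fun x : Esp n => ((g x : ℝ) : ℂ)) = (f : Esp n → ℂ) := rfl
  rw [hfe, ← SchwartzMap.fourier_coe]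
  choose F hF1 hF2 using fun i => schwartz_iter i hg f hf k
  have hcontf : Continuous (𝓕 f : 𝓢(Esp n, ℂ)) := (𝓕 f : 𝓢(Esp n, ℂ)).continuous
  -- pointwise comparison
  have hpt : ∀ i ξ, (ξ i) ^ (2 * k) * ‖𝓕 f ξ‖ ^ 2 ≤ ‖𝓕 (F i) ξ‖ ^ 2 := by
    intro i ξ
    rw [hF2 i ξ, norm_mul, mul_pow, norm_pow]
    refine mul_le_mul_of_nonneg_right ?_ (by positivity)
    rw [← pow_mul, mul_comm k 2, pow_mul, pow_mul]
    refine pow_le_pow_left₀ (by positivity) ?_ k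
    simp only [norm_mul, Complex.norm_I, Complex.norm_real, mul_one, Complex.norm_ofNat,
      Real.norm_eq_abs]
    rw [mul_pow, sq_abs]
    have : (1:ℝ) ≤ (2 * |Real.pi|) ^ 2 := by
      rw [abs_of_pos Real.pi_pos]; nlinarith [Real.pi_gt_three]
    nlinarith [sq_nonneg (ξ i)]
  have hint : ∀ G : 𝓢(Esp n, ℂ), Integrable fun x => ‖G x‖ ^ 2 := fun G =>
    (G.memLp 2 volume).integrable_norm_pow (by simp)
  have hpl : ∀ i, ∫ ξ, ‖𝓕 (F i) ξ‖ ^ 2 ≤ B ^ 2 * volume.real K := by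
    intro i
    rw [SchwartzMap.integral_norm_sq_fourier]
    have hz : ∀ x, x ∉ K → F i x = 0 := by
      intro x hx
      have hx' : x ∈ (tsupport g)ᶜ := fun h => hx (hgK h)
      rw [hF1]
      have : ∀ (m : ℕ), ∀ y ∈ (tsupport g)ᶜ, (pd i)^[m] g y = 0 := by
        intro m
        induction m with
        | zero => intro y hy; exact image_eq_zero_of_notMem_tsupport hy
        | succ m ih =>
          intro y hy
          rw [Function.iterate_succ_apply']
          have : (pd i)^[m] g =ᶠ[nhds y] fun _ => 0 := by
            filter_upwards [(isClosed_tsupport g).isOpen_compl.mem_nhds hy] with z hz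
            exact ih z hz
          simp [pd, this.fderiv_eq]
      rw [this k x hx']; simp
    rw [← setIntegral_eq_integral_of_forall_compl_eq_zero (s := K)
      (fun x hx => by rw [hz x hx]; simp)]
    calc ∫ x in K, ‖F i x‖ ^ 2 ≤ ∫ x in K, B ^ 2 := by
          refine setIntegral_mono_on (hint _).integrableOn
            (integrableOn_const hK.measure_ne_top) hK.measurableSet fun x hx => ?_
          rw [hF1, Complex.norm_real, Real.norm_eq_abs]
          exact pow_le_pow_left₀ (abs_nonneg _) (hb i x hx) 2
      _ = _ := by simp [mul_comm]
  have hpt2 : ∀ ξ : Esp n, ‖ξ‖ ^ (2 * k) * ‖𝓕 f ξ‖ ^ 2 ≤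
      ((n:ℝ) + 1) ^ (2 * k) * ∑ i, ‖𝓕 (F i) ξ‖ ^ 2 := by
    intro ξ
    calc _ ≤ (((n:ℝ) + 1) ^ (2 * k) * ∑ i, (ξ i) ^ (2 * k)) * ‖𝓕 f ξ‖ ^ 2 :=
          mul_le_mul_of_nonneg_right (norm_pow_le_sum ξ hk) (by positivity)
      _ = ((n:ℝ) + 1) ^ (2 * k) * ∑ i, (ξ i) ^ (2 * k) * ‖𝓕 f ξ‖ ^ 2 := by
          rw [mul_assoc, Finset.sum_mul]
      _ ≤ _ := by
          gcongr with i _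
          exact hpt i ξ
  have hI : Integrable fun ξ : Esp n => ((n:ℝ) + 1) ^ (2 * k) * ∑ i, ‖𝓕 (F i) ξ‖ ^ 2 :=
    (integrable_finsetSum _ fun i _ => hint _).const_mul _
  have hI2 : Integrable fun ξ : Esp n => ‖ξ‖ ^ (2 * k) * ‖𝓕 f ξ‖ ^ 2 := by
    refine hI.mono' (by fun_prop) (Filter.Eventually.of_forall fun ξ => ?_)
    rw [Real.norm_of_nonneg (by positivity)]
    exact hpt2 ξ
  refine ⟨hI2, (integral_mono hI2 hI hpt2).trans ?_⟩
  rw [integral_const_mul, integral_finsetSum _ fun i _ => hint _]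
  have hv : 0 ≤ volume.real K := measureReal_nonneg
  calc _ ≤ ((n:ℝ) + 1) ^ (2 * k) * ∑ i : Fin n, B ^ 2 * volume.real K := by
        gcongr with i _
        exact hpl i
    _ = ((n:ℝ) * volume.real K) * (((n:ℝ) + 1) ^ k * B) ^ 2 := by
        simp; ring
    _ ≤ ((n:ℝ) * volume.real K + 1) ^ 2 * (((n:ℝ) + 1) ^ k * B) ^ 2 := by
        have : 0 ≤ (n:ℝ) * volume.real K := by positivity
        gcongr
        nlinarith
    _ = _ := by ring

/-- The single-function estimate. -/
lemma single_bound {n : ℕ} {M : ℕ → ℝ} (hM : IsAdmissible M) {U₀ U V : Set (Esp n)}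
    (hU₀ : IsOpen U₀) (hUU₀ : closure U ⊆ U₀) (hUc : IsCompact (closure U))
    {Q : ℝ} (hQ : 0 < Q) {χ : ℕ → Esp n → ℝ} (hχ : EHCutoff χ U V Q)
    {v : Esp n → ℝ} (hv : v ∈ DCclass M U₀) :
    ∃ N : ℕ, ∀ k : ℕ, 1 ≤ k →
      Integrable (fun ξ : Esp n =>
        ‖ξ‖ ^ (2 * k) * ‖FourierTransform.fourier (fun x : Esp n => ((χ k x * v x : ℝ) : ℂ)) ξ‖ ^ 2)
        volume ∧
      (∫ ξ : Esp n,
          ‖ξ‖ ^ (2 * k) * ‖FourierTransform.fourier (fun x : Esp n => ((χ k x * v x : ℝ) : ℂ)) ξ‖ ^ 2) ≤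
        ((N:ℝ) * (N:ℝ) ^ k * M k) ^ 2 := by
  obtain ⟨C, hC, γ, hγ, hb⟩ := prod_bound hM hU₀ hUU₀ hUc hQ hχ hv
  set D : ℝ := (n:ℝ) * volume.real (closure U) + 1 with hD
  have hDpos : 0 < D := by have : 0 ≤ volume.real (closure U) := measureReal_nonneg; positivity
  obtain ⟨N, hN⟩ := exists_nat_ge (max (D * C) (((n:ℝ) + 1) * γ))
  refine ⟨N, fun k hk => ?_⟩
  have hMk := hM.1.1 k
  obtain ⟨hs, hcs, hsub, -, -⟩ := hχ k hk
  have hts : tsupport (fun y => χ k y * v y) ⊆ tsupport (χ k) := tsupport_mul_subset_left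
  have hsm : ContDiff ℝ (⊤ : ℕ∞) (fun y => χ k y * v y) := by
    rw [contDiff_iff_contDiffAt]
    intro x
    by_cases hx : x ∈ U₀
    · exact hs.contDiffAt.mul (hv.1.contDiffAt (hU₀.mem_nhds hx))
    · have : (fun y => χ k y * v y) =ᶠ[nhds x] fun _ => 0 := by
        have hx' : x ∈ (tsupport (χ k))ᶜ := fun h => hx (hUU₀ (subset_closure (hsub h)))
        filter_upwards [(isClosed_tsupport _).isOpen_compl.mem_nhds hx'] with z hz
        rw [image_eq_zero_of_notMem_tsupport hz, zero_mul]
      exact contDiffAt_const.congr_of_eventuallyEq this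
  obtain ⟨h1, h2⟩ := fourier_weighted hsm hcs.mul_right hUc
    (hts.trans (hsub.trans subset_closure)) hk (by positivity) (hb k hk)
  refine ⟨h1, h2.trans ?_⟩
  rw [← hD]
  have e1 : D * C ≤ N := (le_max_left _ _).trans hN
  have e2 : ((n:ℝ) + 1) * γ ≤ N := (le_max_right _ _).trans hN
  refine pow_le_pow_left₀ (by positivity) ?_ 2
  calc D * ((n:ℝ) + 1) ^ k * (C * γ ^ k * M k) = (D * C) * (((n:ℝ) + 1) * γ) ^ k * M k := by
        rw [mul_pow]; ring
    _ ≤ _ := by gcongr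

/-- Fourier transform of the cut-off product. -/
def GF {n : ℕ} (c : Esp n → ℝ) (w : Esp n → ℝ) (ξ : Esp n) : ℂ :=
  FourierTransform.fourier (fun x : Esp n => ((c x * w x : ℝ) : ℂ)) ξ

lemma GF_congr {n : ℕ} {c : Esp n → ℝ} {S : Set (Esp n)} (hc : ∀ x, x ∉ S → c x = 0)
    {w w' : Esp n → ℝ} (h : ∀ᵐ x ∂volume, x ∈ S → w x = w' x) : GF c w = GF c w' := by
  ext ξ
  refine Real.fourier_congr_ae ?_ ξ
  filter_upwards [h] with x hx
  by_cases hS : x ∈ S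
  · rw [hx hS]
  · simp [hc x hS]

lemma prod_integrable {n : ℕ} {Ω : Set (Esp n)} (hΩ : MeasurableSet Ω)
    (hΩf : volume Ω ≠ ⊤) {c : Esp n → ℝ} (hcc : Continuous c) (hcs : HasCompactSupport c)
    (hc : ∀ x, x ∉ Ω → c x = 0) :
    ∃ K : ℝ, ∀ w : Lp ℝ 2 (volume.restrict Ω),
      Integrable (fun x : Esp n => ((c x * (w : Esp n → ℝ) x : ℝ) : ℂ)) ∧
      ∫ x : Esp n, ‖((c x * (w : Esp n → ℝ) x : ℝ) : ℂ)‖ ≤ K * ‖w‖ := by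
  haveI : IsFiniteMeasure (volume.restrict Ω) := ⟨by simpa using hΩf.lt_top⟩
  obtain ⟨B, hB⟩ := hcc.bounded_above_of_compact_support hcs
  have hB0 : 0 ≤ B := (norm_nonneg _).trans (hB 0)
  refine ⟨B * (volume.restrict Ω Set.univ ^ (1 / (1:ENNReal).toReal - 1 / (2:ENNReal).toReal)).toReal,
    fun w => ?_⟩
  have hwm := Lp.memLp w
  have hw1 : Integrable (w : Esp n → ℝ) (volume.restrict Ω) := hwm.integrable (by norm_num)
  have hz : ∀ x, x ∉ Ω → ((c x * (w : Esp n → ℝ) x : ℝ) : ℂ) = 0 := by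
    intro x hx; simp [hc x hx]
  have hon : Integrable (fun x : Esp n => c x * (w : Esp n → ℝ) x) (volume.restrict Ω) :=
    hw1.bdd_mul hcc.aestronglyMeasurable (Filter.Eventually.of_forall hB)
  have honc : IntegrableOn (fun x : Esp n => ((c x * (w : Esp n → ℝ) x : ℝ) : ℂ)) Ω :=
    hon.ofReal
  refine ⟨honc.integrable_of_forall_notMem_eq_zero hz, ?_⟩
  rw [← setIntegral_eq_integral_of_forall_compl_eq_zero (s := Ω)
      (fun x hx => by rw [hz x hx]; simp)]
  have h1 : ∫ x in Ω, ‖((c x * (w : Esp n → ℝ) x : ℝ) : ℂ)‖ ≤ ∫ x in Ω, B * ‖(w : Esp n → ℝ) x‖ := by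
    refine integral_mono honc.norm (hw1.norm.const_mul B) fun x => ?_
    simp only [Complex.norm_real, norm_mul]
    exact mul_le_mul_of_nonneg_right (hB x) (norm_nonneg _)
  refine h1.trans ?_
  rw [integral_const_mul, mul_assoc]
  refine mul_le_mul_of_nonneg_left ?_ hB0
  rw [integral_norm_eq_lintegral_enorm hw1.1, ← eLpNorm_one_eq_lintegral_enorm, Lp.norm_def,
    ← ENNReal.toReal_mul, mul_comm]
  refine ENNReal.toReal_mono ?_ (eLpNorm_le_eLpNorm_mul_rpow_measure_univ (by norm_num) hw1.1)
  refine ENNReal.mul_ne_top hwm.2.ne ?_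
  refine ENNReal.rpow_ne_top_of_nonneg (by norm_num) (measure_ne_top _ _)

/-- The cut-off Fourier transform as a linear map evaluated pointwise. -/
lemma GF_props {n : ℕ} {Ω : Set (Esp n)} (hΩ : MeasurableSet Ω)
    (hΩf : volume Ω ≠ ⊤) {c : Esp n → ℝ} (hcc : Continuous c) (hcs : HasCompactSupport c)
    (hc : ∀ x, x ∉ Ω → c x = 0) :
    (∀ w : Lp ℝ 2 (volume.restrict Ω), Continuous (GF c w)) ∧
    (∀ w w' : Lp ℝ 2 (volume.restrict Ω), ∀ ξ, GF c (w - w' : Lp ℝ 2 (volume.restrict Ω)) ξ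
      = GF c w ξ - GF c w' ξ) ∧
    (∀ (a : ℝ) (w : Lp ℝ 2 (volume.restrict Ω)), ∀ ξ, GF c (a • w : Lp ℝ 2 (volume.restrict Ω)) ξ
      = a • GF c w ξ) ∧
    (∀ ξ, Continuous fun w : Lp ℝ 2 (volume.restrict Ω) => GF c w ξ) := by
  obtain ⟨K, hK⟩ := prod_integrable hΩ hΩf hcc hcs hc
  have hsub : ∀ w w' : Lp ℝ 2 (volume.restrict Ω), ∀ ξ,
      GF c (w - w' : Lp ℝ 2 (volume.restrict Ω)) ξ = GF c w ξ - GF c w' ξ := by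
    intro w w' ξ
    have h := (ae_restrict_iff' hΩ).1 (Lp.coeFn_sub w w')
    rw [GF_congr hc h]
    unfold GF
    rw [Real.fourier_eq, Real.fourier_eq, Real.fourier_eq, ← integral_sub]
    · refine integral_congr_ae (Filter.Eventually.of_forall fun x => ?_)
      simp only [Pi.sub_apply]
      rw [← smul_sub]; push_cast; ring_nf
    · exact (Real.fourierIntegral_convergent_iff ξ).2 (hK w).1
    · exact (Real.fourierIntegral_convergent_iff ξ).2 (hK w').1
  refine ⟨fun w => ?_, hsub, ?_, ?_⟩
  · exact VectorFourier.fourierIntegral_continuous Real.continuous_fourierChar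
      (by exact continuous_inner) (hK w).1
  · intro a w ξ
    have h := (ae_restrict_iff' hΩ).1 (Lp.coeFn_smul a w)
    rw [GF_congr hc h]
    unfold GF
    rw [Real.fourier_eq, Real.fourier_eq, ← integral_smul]
    refine integral_congr_ae (Filter.Eventually.of_forall fun x => ?_)
    simp only [Pi.smul_apply]
    rw [smul_comm]
    congr 1
    simp; ring
  · intro ξ
    refine (LipschitzWith.of_dist_le_mul (K := K.toNNReal) fun w w' => ?_).continuous
    rw [dist_eq_norm, dist_eq_norm, ← hsub]
    calc ‖GF c (w - w' : Lp ℝ 2 (volume.restrict Ω)) ξ‖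
        ≤ ∫ x : Esp n, ‖((c x * ((w - w' : Lp ℝ 2 (volume.restrict Ω)) : Esp n → ℝ) x : ℝ) : ℂ)‖ :=
          VectorFourier.norm_fourierIntegral_le_integral_norm _ _ _ _ _
      _ ≤ K * ‖w - w'‖ := (hK (w - w')).2
      _ ≤ _ := by gcongr; exact Real.le_coe_toNNReal K

lemma eLp_iff {n : ℕ} {g : Esp n → ℂ} (hg : Continuous g) (k : ℕ) {B : ℝ} (hB : 0 ≤ B) :
    eLpNorm (fun ξ : Esp n => (‖ξ‖ ^ k) • g ξ) 2 volume ≤ ENNReal.ofReal B ↔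
    (Integrable (fun ξ : Esp n => ‖ξ‖ ^ (2 * k) * ‖g ξ‖ ^ 2) ∧
      ∫ ξ : Esp n, ‖ξ‖ ^ (2 * k) * ‖g ξ‖ ^ 2 ≤ B ^ 2) := by
  have hcont : Continuous fun ξ : Esp n => (‖ξ‖ ^ k) • g ξ := by fun_prop
  have hsq : (fun ξ : Esp n => ‖ξ‖ ^ (2 * k) * ‖g ξ‖ ^ 2) = fun ξ => ‖(‖ξ‖ ^ k) • g ξ‖ ^ 2 := by
    ext ξ
    rw [norm_smul, mul_pow, norm_pow, norm_norm]; ring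
  rw [hsq, ← memLp_two_iff_integrable_sq_norm hcont.aestronglyMeasurable]
  have key : MemLp (fun ξ : Esp n => (‖ξ‖ ^ k) • g ξ) 2 volume →
      (eLpNorm (fun ξ : Esp n => (‖ξ‖ ^ k) • g ξ) 2 volume ≤ ENNReal.ofReal B ↔
        ∫ ξ : Esp n, ‖(‖ξ‖ ^ k) • g ξ‖ ^ 2 ≤ B ^ 2) := by
    intro h
    rw [h.eLpNorm_eq_integral_rpow_norm (by norm_num) (by norm_num),
      ENNReal.ofReal_le_ofReal_iff hB]
    simp only [ENNReal.toReal_ofNat, Real.rpow_ofNat]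
    rw [← one_div, ← Real.sqrt_eq_rpow, Real.sqrt_le_left hB]
  constructor
  · intro h
    have hm : MemLp (fun ξ : Esp n => (‖ξ‖ ^ k) • g ξ) 2 volume :=
      ⟨hcont.aestronglyMeasurable, h.trans_lt ENNReal.ofReal_lt_top⟩
    exact ⟨hm, (key hm).1 h⟩
  · rintro ⟨hm, h⟩
    exact (key hm).2 h

/-- Proposition 1 of the paper: let `M` be an admissible weight sequence,
`Ω` a bounded open set, `E` a Banach space injected continuously into `L²(Ω)`, and suppose
every `u ∈ E` agrees a.e. on an open set `U₀ ⊆ Ω` with a function `ũ` of class `E^{M}(U₀)`.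
Then for `V ⋐ U ⋐ U₀` and any Ehrenpreis–Hörmander cut-off sequence `(χ_k)` supported in `U`
and centered in `V` there are `C, γ > 0` such that `|ξ|^k 𝓕(χ_k ũ) ∈ L²(ℝ^n)` with
`‖ |ξ|^k 𝓕(χ_k ũ) ‖_{L²} ≤ C γ^k M_k ‖u‖_E` for all `k ≥ 1` and `u ∈ E`. -/
theorem statement12 {n : ℕ} (M : ℕ → ℝ) (hM : IsAdmissible M)
    (Ω : Set (Esp n)) (hΩo : IsOpen Ω) (hΩb : Bornology.IsBounded Ω)
    (E : Type) [NormedAddCommGroup E] [NormedSpace ℝ E] [CompleteSpace E]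
    (ι : E →L[ℝ] Lp ℝ 2 (volume.restrict Ω)) (hι : Function.Injective ι)
    (U₀ : Set (Esp n)) (hU₀o : IsOpen U₀) (hU₀Ω : U₀ ⊆ Ω)
    (hreg : ∀ u : E, ∃ v : Esp n → ℝ, v ∈ DCclass M U₀ ∧
      ∀ᵐ x ∂volume, x ∈ U₀ → (ι u : Esp n → ℝ) x = v x)
    (V U : Set (Esp n)) (hVo : IsOpen V) (hUo : IsOpen U)
    (hVU : closure V ⊆ U) (hVc : IsCompact (closure V))
    (hUU₀ : closure U ⊆ U₀) (hUc : IsCompact (closure U))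
    (Q : ℝ) (hQ : 0 < Q) (χ : ℕ → Esp n → ℝ) (hχ : EHCutoff χ U V Q) :
    ∃ C > 0, ∃ γ > 0, ∀ k : ℕ, 1 ≤ k → ∀ u : E, ∀ v : Esp n → ℝ,
      v ∈ DCclass M U₀ → (∀ᵐ x ∂volume, x ∈ U₀ → (ι u : Esp n → ℝ) x = v x) →
      Integrable (fun ξ : Esp n =>
        ‖ξ‖ ^ (2 * k) * ‖FourierTransform.fourier (fun x : Esp n => ((χ k x * v x : ℝ) : ℂ)) ξ‖ ^ 2)
        volume ∧
      (∫ ξ : Esp n,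
          ‖ξ‖ ^ (2 * k) * ‖FourierTransform.fourier (fun x : Esp n => ((χ k x * v x : ℝ) : ℂ)) ξ‖ ^ 2) ≤
        (C * γ ^ k * M k * ‖u‖) ^ 2 := by
  have hΩm : MeasurableSet Ω := hΩo.measurableSet
  have hΩf : volume Ω ≠ ⊤ := hΩb.measure_lt_top.ne
  have hMp := hM.1.1
  have hz : ∀ k, 1 ≤ k → ∀ x, x ∉ U₀ → χ k x = 0 := by
    intro k hk x hx
    exact image_eq_zero_of_notMem_tsupport
      fun h => hx (hUU₀ (subset_closure ((hχ k hk).2.2.1 h)))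
  have hP := fun k (hk : 1 ≤ k) => GF_props hΩm hΩf (hχ k hk).1.continuous (hχ k hk).2.1
    (fun x hx => hz k hk x (fun h => hx (hU₀Ω h)))
  let W : ℕ → E → Esp n → ℂ := fun k u ξ => (‖ξ‖ ^ k) • GF (χ k) (ι u) ξ
  have hWc : ∀ k, 1 ≤ k → ∀ u, Continuous (W k u) := by
    intro k hk u
    have := (hP k hk).1 (ι u)
    fun_prop
  let A : ℕ → Set E := fun N => {u | ∀ k, 1 ≤ k →
    eLpNorm (W k u) 2 volume ≤ ENNReal.ofReal ((N:ℝ) * (N:ℝ) ^ k * M k)}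
  have hB : ∀ N k : ℕ, 0 ≤ (N:ℝ) * (N:ℝ) ^ k * M k := fun N k => by
    have := hMp k; positivity
  have hcl : ∀ N, IsClosed (A N) := by
    intro N
    refine IsSeqClosed.isClosed fun us u hus hlim k hk => ?_
    refine (Lp.eLpNorm_lim_le_liminf_eLpNorm
      (fun j => (hWc k hk (us j)).aestronglyMeasurable) (W k u)
      (Filter.Eventually.of_forall fun ξ => ?_)).trans ?_
    · have h1 : Tendsto (fun j => GF (χ k) (ι (us j)) ξ) atTop (nhds (GF (χ k) (ι u) ξ)) :=
        (((hP k hk).2.2.2 ξ).comp ι.continuous).continuousAt.tendsto.comp hlim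
      exact h1.const_smul (‖ξ‖ ^ k)
    · refine liminf_le_of_le (by isBoundedDefault) fun b hb => ?_
      obtain ⟨j, hj⟩ := hb.exists
      exact hj.trans (hus j k hk)
  have hcov : ⋃ N, A N = Set.univ := by
    refine Set.eq_univ_of_forall fun u => Set.mem_iUnion.2 ?_
    obtain ⟨v, hv, hae⟩ := hreg u
    obtain ⟨N, hN⟩ := single_bound hM hU₀o hUU₀ hUc hQ hχ hv
    refine ⟨N, fun k hk => ?_⟩
    refine (eLp_iff ((hP k hk).1 (ι u)) k (hB N k)).2 ?_
    rw [GF_congr (hz k hk) hae]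
    exact hN k hk
  obtain ⟨N, u₀, hu₀⟩ := nonempty_interior_of_iUnion_of_closed hcl hcov
  obtain ⟨r, hr, hball⟩ := Metric.isOpen_iff.1 isOpen_interior u₀ hu₀
  have hballA : Metric.ball u₀ r ⊆ A N := hball.trans interior_subset
  refine ⟨4 / r * (N + 1), by positivity, N + 1, by positivity, ?_⟩
  intro k hk u v hv hae
  have hMk := hMp k
  have hC0 : 0 ≤ 4 / r * ((N:ℝ) + 1) * ((N:ℝ) + 1) ^ k * M k * ‖u‖ := by positivity
  suffices h : eLpNorm (W k u) 2 volume ≤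
      ENNReal.ofReal (4 / r * ((N:ℝ) + 1) * ((N:ℝ) + 1) ^ k * M k * ‖u‖) by
    have := (eLp_iff ((hP k hk).1 (ι u)) k hC0).1 h
    rw [GF_congr (hz k hk) hae] at this
    exact this
  set a : ℝ := 2 * ‖u‖ / r with ha
  have ha0 : 0 ≤ a := by positivity
  set w : E := a⁻¹ • u with hw
  have haw : a • w = u := by
    by_cases hu : u = 0
    · simp [hw, hu]
    · have : a ≠ 0 := by have := norm_pos_iff.2 hu; positivity
      rw [hw, smul_inv_smul₀ this]
  have hwn : ‖w‖ < r := by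
    by_cases hu : u = 0
    · simpa [hw, hu] using hr
    · have hup := norm_pos_iff.2 hu
      rw [hw, norm_smul, norm_inv, Real.norm_of_nonneg ha0, ha]
      field_simp
      linarith
  have h1 : u₀ + w ∈ A N := hballA (by simpa [Metric.mem_ball, dist_eq_norm] using hwn)
  have h2 : u₀ ∈ A N := hballA (Metric.mem_ball_self hr)
  have hWw : W k u = a • (W k (u₀ + w) - W k u₀) := by
    ext ξ
    have e : ι u = a • (ι (u₀ + w) - ι u₀) := by
      rw [← map_sub, ← map_smul, add_sub_cancel_left, haw]
    simp only [W, Pi.smul_apply, Pi.sub_apply]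
    rw [e, (hP k hk).2.2.1, (hP k hk).2.1, ← smul_sub, smul_comm]
  rw [hWw]
  refine (eLpNorm_const_smul_le).trans ?_
  calc ‖a‖ₑ * eLpNorm (W k (u₀ + w) - W k u₀) 2 volume
      ≤ ‖a‖ₑ * (ENNReal.ofReal ((N:ℝ) * (N:ℝ) ^ k * M k)
          + ENNReal.ofReal ((N:ℝ) * (N:ℝ) ^ k * M k)) := by
        gcongr
        exact (eLpNorm_sub_le (hWc k hk _).aestronglyMeasurable
          (hWc k hk _).aestronglyMeasurable (by norm_num)).trans (add_le_add (h1 k hk) (h2 k hk))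
    _ = ENNReal.ofReal (a * ((N:ℝ) * (N:ℝ) ^ k * M k + (N:ℝ) * (N:ℝ) ^ k * M k)) := by
        rw [Real.enorm_of_nonneg ha0, ← ENNReal.ofReal_add (hB N k) (hB N k),
          ← ENNReal.ofReal_mul ha0]
    _ ≤ _ := by
        refine ENNReal.ofReal_le_ofReal ?_
        have e1 : (N:ℝ) * (N:ℝ) ^ k * M k ≤ ((N:ℝ) + 1) * ((N:ℝ) + 1) ^ k * M k := by
          gcongr <;> linarith
        calc a * ((N:ℝ) * (N:ℝ) ^ k * M k + (N:ℝ) * (N:ℝ) ^ k * M k)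
            ≤ a * (((N:ℝ) + 1) * ((N:ℝ) + 1) ^ k * M k
              + ((N:ℝ) + 1) * ((N:ℝ) + 1) ^ k * M k) := by gcongr
          _ = _ := by rw [ha]; ring

end
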